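/- Let (W, S) be a Coxeter system, B⁺ its Artin–Tits monoid, and I ⊆ S. If two elements x, y ∈ B_I⁺ have a common right multiple in B⁺, then they have a common right multiple lying in B_I⁺; moreover every right lcm of x and y in B⁺ lies in B_I⁺. -/

import Mathlib

/-- The alternating word `s t s t ⋯` of length `m`, starting with `s`. -/
def altWord {B : Type*} (s t : B) : ℕ → List B
  | 0 => []
  | n + 1 => s :: altWord t s n

/-- The braid congruence on the free monoid over `B` associated to a Coxeter matrix `M`:
the congruence generated by the braid relations, identifying the alternating words
`s t s ⋯` and `t s t ⋯` of length `M s t` whenever `s ≠ t` and `M s t < ∞`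
(infinity being encoded by the entry `0`). -/
def braidCon {B : Type*} (M : CoxeterMatrix B) : Con (FreeMonoid B) :=
  conGen (fun a b => ∃ s t : B, s ≠ t ∧ M s t ≠ 0 ∧
    a = FreeMonoid.ofList (altWord s t (M s t)) ∧
    b = FreeMonoid.ofList (altWord t s (M s t)))

/-- The Artin–Tits monoid of a Coxeter matrix `M`: the quotient of the free monoid
on `B` by the braid relations. -/
def ArtinTitsMonoid {B : Type*} (M : CoxeterMatrix B) : Type _ :=
  (braidCon M).Quotient

instance {B : Type*} (M : CoxeterMatrix B) : Monoid (ArtinTitsMonoid M) :=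
  inferInstanceAs (Monoid (braidCon M).Quotient)

/-- The image in the Artin–Tits monoid of a generator. -/
def ArtinTitsMonoid.of {B : Type*} (M : CoxeterMatrix B) (s : B) : ArtinTitsMonoid M :=
  (braidCon M).mk' (FreeMonoid.of s)

/-!
Read a word over `S` letter by letter while keeping track of the minimal representative `w` of the
coset `W_I u`, where `u` is the element of the Coxeter group read so far. When a letter `r` is read,
Deodhar's lemma leaves two possibilities: either `w sᵣ` is again a minimal representative, and `w`
is replaced by it, or `w sᵣ = sₐ w` with `a ∈ I`, and then the letter `a` is written. The resulting
word in `I` depends, up to braid relations, only on the class of the given word, so that it defines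
a map `ρ : B⁺ → B_I⁺`; since words in `I` are copied verbatim, `ρ (x u) = x ρ(u)` for `x ∈ B_I⁺`.
Hence `ρ` sends a common right multiple of `x, y ∈ B_I⁺` to a common right multiple in `B_I⁺`. As
braid relations preserve the set of letters of a word, left divisors of elements of `B_I⁺` lie in
`B_I⁺`, and a right lcm is such a divisor.
-/

namespace Coxeter

section DihedralReflections

open Module

variable {K V : Type*} [Field K] [AddCommGroup V] [Module K V] {x y : V} {f g : Dual K V} {ω : K}

theorem reflection_mul_reflection_apply_add_smul (hfx : f x = 2) (hgy : g y = 2) (hω : ω ≠ 0)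
    (hfy : f y = -(ω + ω⁻¹)) (hgx : g x = -(ω + ω⁻¹)) :
    (reflection hfx * reflection hgy) (x + ω • y) = (ω ^ 2)⁻¹ • (x + ω • y) := by
  have hy : reflection hgy (x + ω • y) = x + ω⁻¹ • y := by
    rw [reflection_apply, map_add, map_smul, hgx, hgy, smul_eq_mul]
    module
  have hx : f (x + ω⁻¹ • y) = 1 - (ω ^ 2)⁻¹ := by
    rw [map_add, map_smul, hfx, hfy, smul_eq_mul]
    field_simp
    ring
  have hωω : (ω ^ 2)⁻¹ * ω = ω⁻¹ := by field_simp
  rw [LinearEquiv.mul_apply, hy, reflection_apply, hx, smul_add, smul_smul, hωω]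
  module

theorem reflection_mul_reflection_pow_apply_add_smul (hfx : f x = 2) (hgy : g y = 2) (hω : ω ≠ 0)
    (hfy : f y = -(ω + ω⁻¹)) (hgx : g x = -(ω + ω⁻¹)) (n : ℕ) :
    ((reflection hfx * reflection hgy) ^ n) (x + ω • y) = ((ω ^ 2) ^ n)⁻¹ • (x + ω • y) := by
  induction n with
  | zero => simp
  | succ n ih =>
    rw [pow_succ, LinearEquiv.mul_apply,
      reflection_mul_reflection_apply_add_smul hfx hgy hω hfy hgx, map_smul, ih, smul_smul,
      ← mul_inv, ← pow_succ']

theorem exists_apply_sub_eigenvectors_eq_zero (hfx : f x = 2) (hgy : g y = 2) (hω : ω ≠ 0)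
    (hω1 : ω ^ 2 ≠ 1) (hfy : f y = -(ω + ω⁻¹)) (hgx : g x = -(ω + ω⁻¹)) (z : V) :
    ∃ a b : K, f (z - (a • (x + ω • y) + b • (x + ω⁻¹ • y))) = 0 ∧
      g (z - (a • (x + ω • y) + b • (x + ω⁻¹ • y))) = 0 := by
  have hδ : ω ^ 2 - 1 ≠ 0 := sub_ne_zero.mpr hω1
  refine ⟨-(f z + ω⁻¹ * g z) / (ω - ω⁻¹) ^ 2, -(f z + ω * g z) / (ω - ω⁻¹) ^ 2, ?_, ?_⟩ <;>
  · simp only [map_sub, map_add, map_smul, smul_eq_mul, hfx, hgy, hfy, hgx]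
    have : ω - ω⁻¹ = (ω ^ 2 - 1) / ω := by field_simp
    rw [this]
    field_simp
    ring

theorem reflection_mul_reflection_pow_eq_one (hfx : f x = 2) (hgy : g y = 2) (hω : ω ≠ 0)
    (hω1 : ω ^ 2 ≠ 1) (hfy : f y = -(ω + ω⁻¹)) (hgx : g x = -(ω + ω⁻¹)) {n : ℕ}
    (hn : (ω ^ 2) ^ n = 1) : (reflection hfx * reflection hgy) ^ n = 1 := by
  ext z
  -- The product fixes `ker f ∩ ker g`, of which its two eigenvectors span a complement.
  obtain ⟨a, b, hf, hg⟩ := exists_apply_sub_eigenvectors_eq_zero hfx hgy hω hω1 hfy hgx z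
  set u := a • (x + ω • y) + b • (x + ω⁻¹ • y) with hu
  have hfix : ((reflection hfx * reflection hgy) ^ n) (z - u) = z - u := by
    rw [LinearEquiv.pow_apply]
    refine Function.iterate_fixed ?_ n
    rw [LinearEquiv.mul_apply, reflection_apply (h := hgy), hg, zero_smul, sub_zero,
      reflection_apply, hf, zero_smul, sub_zero]
  have hplus : ((reflection hfx * reflection hgy) ^ n) (x + ω • y) = x + ω • y := by
    rw [reflection_mul_reflection_pow_apply_add_smul hfx hgy hω hfy hgx, hn, inv_one, one_smul]
  have hminus : ((reflection hfx * reflection hgy) ^ n) (x + ω⁻¹ • y) = x + ω⁻¹ • y := by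
    have hcomm : ω + ω⁻¹ = ω⁻¹ + ω⁻¹⁻¹ := by rw [inv_inv, add_comm]
    rw [hcomm] at hfy hgx
    rw [reflection_mul_reflection_pow_apply_add_smul hfx hgy (inv_ne_zero hω) hfy hgx, inv_pow ω,
      inv_pow, hn, inv_inv, one_smul]
  have hu_fix : ((reflection hfx * reflection hgy) ^ n) u = u := by
    rw [hu, map_add, map_smul, map_smul, hplus, hminus]
  calc ((reflection hfx * reflection hgy) ^ n) z
      = ((reflection hfx * reflection hgy) ^ n) (z - u + u) := by rw [sub_add_cancel]
    _ = z - u + u := by rw [map_add, hfix, hu_fix]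
    _ = z := sub_add_cancel z u

end DihedralReflections

section GeometricRepresentation

variable {B : Type*} (M : CoxeterMatrix B)

/-- A complex number whose square has order `m`, where `m = 0` encodes infinite order. The
off-diagonal entries of the Cartan matrix used below are `-(ω + ω⁻¹)` for such an `ω`; any number
that is not a root of unity serves for `m = 0`. -/
noncomputable def halfAngleRoot (m : ℕ) : ℂ :=
  if m = 0 then 2 else Complex.exp (Real.pi * Complex.I / m)

theorem halfAngleRoot_ne_zero (m : ℕ) : halfAngleRoot m ≠ 0 := by
  unfold halfAngleRoot
  split_ifs
  exacts [two_ne_zero, Complex.exp_ne_zero _]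

theorem orderOf_halfAngleRoot_sq (m : ℕ) : orderOf (halfAngleRoot m ^ 2) = m := by
  unfold halfAngleRoot
  split_ifs with hm
  · rw [hm, orderOf_eq_zero_iff']
    intro n hn h
    have : ((4 ^ n : ℕ) : ℂ) = 1 := by rw [← h]; norm_num
    exact (Nat.one_lt_pow hn.ne' (by norm_num : 1 < 4)).ne' (by exact_mod_cast this)
  · rw [← Complex.exp_nat_mul, Nat.cast_two, ← mul_div_assoc, ← mul_assoc]
    exact (Complex.isPrimitiveRoot_exp m hm).eq_orderOf.symm

theorem halfAngleRoot_one : halfAngleRoot 1 = -1 := by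
  simp [halfAngleRoot]

/-- The simple coroot of `i`, as a linear form on the space with basis the simple roots. For
`M i j ≠ 0` its value at the simple root of `j` is the usual `-2 cos (π / M i j)`. -/
noncomputable def simpleCoroot (i : B) : Module.Dual ℂ (B →₀ ℂ) :=
  Finsupp.linearCombination ℂ fun j => -(halfAngleRoot (M i j) + (halfAngleRoot (M i j))⁻¹)

theorem simpleCoroot_single (i j : B) : simpleCoroot M i (Finsupp.single j 1) =
    -(halfAngleRoot (M i j) + (halfAngleRoot (M i j))⁻¹) := by
  simp [simpleCoroot]

theorem simpleCoroot_single_self (i : B) : simpleCoroot M i (Finsupp.single i 1) = 2 := by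
  rw [simpleCoroot_single, M.diagonal, halfAngleRoot_one]
  norm_num

/-- The reflection by which the generator `i` acts in the geometric representation. -/
noncomputable def simpleReflection (i : B) : (B →₀ ℂ) ≃ₗ[ℂ] (B →₀ ℂ) :=
  Module.reflection (simpleCoroot_single_self M i)

theorem isLiftable_simpleReflection : M.IsLiftable (simpleReflection M) := by
  intro i j
  rcases eq_or_ne i j with rfl | hij
  · rw [M.diagonal, pow_one]
    exact mul_eq_one_iff_eq_inv.mpr (Module.reflection_inv _).symm
  · have horder := orderOf_halfAngleRoot_sq (M i j)
    have hω1 : halfAngleRoot (M i j) ^ 2 ≠ 1 := by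
      rw [Ne, ← orderOf_eq_one_iff, horder]
      exact M.off_diagonal i j hij
    have hji : simpleCoroot M j (Finsupp.single i 1) =
        -(halfAngleRoot (M i j) + (halfAngleRoot (M i j))⁻¹) := by
      rw [simpleCoroot_single, M.symmetric]
    have hpow : (halfAngleRoot (M i j) ^ 2) ^ M i j = 1 :=
      orderOf_dvd_iff_pow_eq_one.mp horder.dvd
    unfold simpleReflection
    exact reflection_mul_reflection_pow_eq_one _ _ (halfAngleRoot_ne_zero (M i j)) hω1
      (simpleCoroot_single M i j) hji hpow

theorem dvd_of_simpleReflection_mul_pow_eq_one {i j : B} (hij : i ≠ j) {n : ℕ}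
    (h : (simpleReflection M i * simpleReflection M j) ^ n = 1) : M i j ∣ n := by
  have heigen := reflection_mul_reflection_pow_apply_add_smul (simpleCoroot_single_self M i)
    (simpleCoroot_single_self M j) (halfAngleRoot_ne_zero (M i j)) (simpleCoroot_single M i j)
    (by rw [simpleCoroot_single, M.symmetric]) n
  change ((simpleReflection M i * simpleReflection M j) ^ n) _ = _ at heigen
  rw [h] at heigen
  have hcoeff := DFunLike.congr_fun heigen i
  rw [← orderOf_halfAngleRoot_sq (M i j), orderOf_dvd_iff_pow_eq_one]
  simpa [hij, eq_comm] using hcoeff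

variable {M} {W : Type*} [Group W] (cs : CoxeterSystem M W)

theorem orderOf_simple_mul_simple (i j : B) : orderOf (cs.simple i * cs.simple j) = M i j := by
  refine Nat.dvd_antisymm (orderOf_dvd_of_pow_eq_one (cs.simple_mul_simple_pow i j)) ?_
  rcases eq_or_ne i j with rfl | hij
  · simp
  · apply dvd_of_simpleReflection_mul_pow_eq_one M hij
    have h := congrArg (cs.lift ⟨_, isLiftable_simpleReflection M⟩)
      (pow_orderOf_eq_one (cs.simple i * cs.simple j))
    rwa [map_pow, map_mul, cs.lift_apply_simple (isLiftable_simpleReflection M),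
      cs.lift_apply_simple (isLiftable_simpleReflection M), map_one] at h

theorem simple_injective : Function.Injective cs.simple := by
  intro i j hij
  by_contra hne
  apply M.off_diagonal i j hne
  rw [← orderOf_simple_mul_simple cs, hij, cs.simple_mul_simple_self, orderOf_one]

end GeometricRepresentation

section AlternatingWords

variable {B : Type*}

theorem eq_or_eq_of_mem_altWord {s t r : B} {n : ℕ} (h : r ∈ altWord s t n) : r = s ∨ r = t := by
  induction n generalizing s t with
  | zero => simp [altWord] at h
  | succ n ih =>
    rcases List.mem_cons.mp h with h | h
    exacts [.inl h, (ih h).symm]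

theorem mem_altWord_iff {s t r : B} {n : ℕ} (hn : 2 ≤ n) : r ∈ altWord s t n ↔ r = s ∨ r = t := by
  refine ⟨eq_or_eq_of_mem_altWord, ?_⟩
  obtain ⟨k, rfl⟩ := Nat.exists_eq_add_of_le' hn
  rintro (rfl | rfl) <;> simp [altWord]

theorem altWord_eq_reverse_alternatingWord (s t : B) (n : ℕ) :
    altWord s t n = (CoxeterSystem.alternatingWord t s n).reverse := by
  induction n generalizing s t with
  | zero => rfl
  | succ n ih =>
    rw [altWord, ih, CoxeterSystem.alternatingWord_succ, List.concat_eq_append,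
      List.reverse_append, List.reverse_singleton, List.singleton_append]

theorem altWord_two_mul (s t : B) (n : ℕ) :
    altWord s t (2 * n) = (List.replicate n [s, t]).flatten := by
  induction n with
  | zero => rfl
  | succ n ih => rw [Nat.mul_succ, altWord, altWord, ih, List.replicate_succ]; rfl

theorem reverse_altWord_two_mul (s t : B) (n : ℕ) :
    (altWord s t (2 * n)).reverse = altWord t s (2 * n) := by
  simp [altWord_two_mul, List.reverse_flatten]

theorem prod_map_altWord_two_mul {G : Type*} [Monoid G] (f : B → G) (s t : B) (n : ℕ) :
    ((altWord s t (2 * n)).map f).prod = (f s * f t) ^ n := by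
  simp [altWord_two_mul, List.map_flatten, List.prod_flatten]

end AlternatingWords

variable {B : Type*} {M : CoxeterMatrix B} {W : Type*} [Group W] (cs : CoxeterSystem M W)

section InversionSequences

theorem leftInvSeq_append (ω ω' : List B) : cs.leftInvSeq (ω ++ ω') =
    cs.leftInvSeq ω ++ (cs.leftInvSeq ω').map (MulAut.conj (cs.wordProd ω)) := by
  induction ω with
  | nil => simp
  | cons i ω ih => simp [CoxeterSystem.leftInvSeq, ih, cs.wordProd_cons]

theorem wordProd_altWord_comm (s t : B) :
    cs.wordProd (altWord s t (M s t)) = cs.wordProd (altWord t s (M s t)) := by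
  rw [altWord_eq_reverse_alternatingWord, altWord_eq_reverse_alternatingWord,
    cs.wordProd_reverse, cs.wordProd_reverse]
  have hbraid := cs.wordProd_braidWord_eq s t
  rw [CoxeterSystem.braidWord, CoxeterSystem.braidWord, M.symmetric t s] at hbraid
  rw [hbraid]

theorem leftInvSeq_altWord (s t : B) (n : ℕ) : cs.leftInvSeq (altWord s t n) =
    (List.range n).map fun k => (cs.simple s * cs.simple t) ^ k * cs.simple s := by
  induction n generalizing s t with
  | zero => rfl
  | succ n ih =>
    have hconj (k : ℕ) : MulAut.conj (cs.simple s)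
        ((cs.simple t * cs.simple s) ^ k * cs.simple t) =
          (cs.simple s * cs.simple t) ^ (k + 1) * cs.simple s := by
      rw [map_mul, map_pow, map_mul, pow_succ, mul_assoc _ (_ * _)]
      simp [MulAut.conj_apply, mul_assoc]
    rw [altWord, CoxeterSystem.leftInvSeq, ih, List.range_succ_eq_map, List.map_cons, pow_zero,
      one_mul, List.map_map, List.map_map]
    congr 1
    exact List.map_congr_left fun k _ => hconj k

theorem leftInvSeq_altWord_comm (s t : B) : cs.leftInvSeq (altWord t s (M s t)) =
    (cs.leftInvSeq (altWord s t (M s t))).reverse := by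
  rw [leftInvSeq_altWord, leftInvSeq_altWord]
  refine List.ext_getElem (by simp) fun k hk _ => ?_
  rw [List.length_map, List.length_range] at hk
  have hpow : (cs.simple s * cs.simple t) ^ (M s t - 1 - k) =
      (cs.simple t * cs.simple s) ^ (k + 1) := by
    rw [show cs.simple t * cs.simple s = (cs.simple s * cs.simple t)⁻¹ by simp, inv_pow,
      eq_inv_iff_mul_eq_one, ← pow_add, show M s t - 1 - k + (k + 1) = M s t by lia,
      cs.simple_mul_simple_pow]
  simp [hpow, pow_succ, mul_assoc]

theorem even_count_leftInvSeq_altWord [DecidableEq W] (s t : B) (x : W) :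
    Even ((cs.leftInvSeq (altWord s t (2 * M s t))).count x) := by
  have hperiod (k : ℕ) : (cs.simple s * cs.simple t) ^ (M s t + k) =
      (cs.simple s * cs.simple t) ^ k := by
    rw [pow_add, cs.simple_mul_simple_pow, one_mul]
  rw [leftInvSeq_altWord, two_mul, List.range_add, List.map_append, List.map_map,
    List.count_append]
  simp only [Function.comp_def, hperiod, Even.add_self]

end InversionSequences

section Exchange

open Classical in
/-- The map `(x, ε) ↦ (sᵢ x sᵢ, ε + [x = sᵢ])`. These maps define an action of `W`, whose second
component records the parity of the number of occurrences of `x` in an inversion sequence; this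
parity thus depends only on the element of `W` which the word represents. -/
noncomputable def inversionParity (i : B) : Function.End (W × ZMod 2) := fun p =>
  (cs.simple i * p.1 * cs.simple i, p.2 + if p.1 = cs.simple i then 1 else 0)

open Classical in
theorem prod_map_inversionParity_apply (ω : List B) (p : W × ZMod 2) :
    (ω.map (inversionParity cs)).prod p =
      (cs.wordProd ω * p.1 * (cs.wordProd ω)⁻¹, p.2 + (cs.rightInvSeq ω).count p.1) := by
  induction ω with
  | nil => simp [Function.End.one_def]
  | cons i ω ih =>
    have hconj : cs.wordProd ω * (p.1 * (cs.wordProd ω)⁻¹) = cs.simple i ↔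
        (cs.wordProd ω)⁻¹ * (cs.simple i * cs.wordProd ω) = p.1 := by
      rw [← mul_assoc, mul_inv_eq_iff_eq_mul, ← eq_inv_mul_iff_mul_eq, eq_comm]
    rw [List.map_cons, List.prod_cons, Function.End.mul_def]
    change inversionParity cs i ((ω.map (inversionParity cs)).prod p) = _
    rw [ih, CoxeterSystem.rightInvSeq, List.count_cons, cs.wordProd_cons]
    simp [inversionParity, hconj, mul_assoc, add_assoc]

theorem isLiftable_inversionParity : M.IsLiftable (inversionParity cs) := by
  classical
  intro i j
  have hword : cs.wordProd (altWord i j (2 * M i j)) = 1 := by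
    rw [CoxeterSystem.wordProd, prod_map_altWord_two_mul, cs.simple_mul_simple_pow]
  have heven (x : W) : Even ((cs.rightInvSeq (altWord i j (2 * M i j))).count x) := by
    rw [← List.count_reverse, ← cs.leftInvSeq_reverse, reverse_altWord_two_mul, M.symmetric]
    exact even_count_leftInvSeq_altWord cs j i x
  funext p
  rw [← prod_map_altWord_two_mul, prod_map_inversionParity_apply, hword,
    (ZMod.natCast_eq_zero_iff_even).mpr (heven _)]
  simp [Function.End.one_def]

open Classical in
theorem natCast_count_leftInvSeq_congr {ω ω' : List B}
    (h : cs.wordProd ω = cs.wordProd ω') (x : W) :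
    ((cs.leftInvSeq ω).count x : ZMod 2) = (cs.leftInvSeq ω').count x := by
  let φ := cs.lift ⟨_, isLiftable_inversionParity cs⟩
  have hφ (τ : List B) : (φ (cs.wordProd τ.reverse) (x, 0)).2 = (cs.leftInvSeq τ).count x := by
    rw [CoxeterSystem.wordProd, map_list_prod, List.map_map]
    have hsimple : φ ∘ cs.simple = inversionParity cs :=
      funext fun i => cs.lift_apply_simple (isLiftable_inversionParity cs) i
    rw [hsimple, prod_map_inversionParity_apply, cs.rightInvSeq_reverse, List.count_reverse]
    simp
  rw [← hφ, ← hφ, cs.wordProd_reverse, cs.wordProd_reverse, h]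

theorem simple_mem_leftInvSeq_of_isLeftDescent {ω : List B} {i : B}
    (h : cs.IsLeftDescent (cs.wordProd ω) i) : cs.simple i ∈ cs.leftInvSeq ω := by
  classical
  obtain ⟨τ, hτ, hword⟩ := cs.exists_isReduced (cs.simple i * cs.wordProd ω)
  have hword' : cs.wordProd (i :: τ) = cs.wordProd ω := by
    rw [cs.wordProd_cons, ← hword, cs.simple_mul_simple_cancel_left]
  have hred : cs.IsReduced (i :: τ) := by
    rw [CoxeterSystem.IsReduced, hword', ← (cs.isLeftDescent_iff).mp h, hword, hτ,
      List.length_cons]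
  have hcount : (cs.leftInvSeq (i :: τ)).count (cs.simple i) = 1 :=
    List.count_eq_one_of_mem hred.nodup_leftInvSeq List.mem_cons_self
  by_contra hmem
  have hparity := natCast_count_leftInvSeq_congr cs hword' (cs.simple i)
  rw [hcount, List.count_eq_zero_of_not_mem hmem] at hparity
  simp at hparity

end Exchange

section ParabolicSubgroups

/-- The standard parabolic subgroup `W_J`. -/
abbrev parabolicSubgroup (J : Set B) : Subgroup W := Subgroup.closure (cs.simple '' J)

/-- `w` has minimal length in its coset `W_J w`. -/
def IsMinCosetRep (J : Set B) (w : W) : Prop :=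
  ∀ u ∈ parabolicSubgroup cs J, cs.length w ≤ cs.length (u * w)

variable {J : Set B} {u w : W}

theorem simple_mem_parabolicSubgroup {i : B} (hi : i ∈ J) :
    cs.simple i ∈ parabolicSubgroup cs J :=
  Subgroup.subset_closure (Set.mem_image_of_mem _ hi)

theorem wordProd_mem_parabolicSubgroup {ω : List B} (hω : ∀ i ∈ ω, i ∈ J) :
    cs.wordProd ω ∈ parabolicSubgroup cs J :=
  Subgroup.list_prod_mem _ <| by
    simpa using fun i hi => simple_mem_parabolicSubgroup cs (hω i hi)

theorem isMinCosetRep_one (J : Set B) : IsMinCosetRep cs J 1 := fun u _ => by simp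

theorem exists_isMinCosetRep_mul (J : Set B) (w : W) :
    ∃ u ∈ parabolicSubgroup cs J, IsMinCosetRep cs J (u * w) := by
  obtain ⟨u, hu, hmin⟩ := exists_minimalFor_of_wellFoundedLT (· ∈ parabolicSubgroup cs J)
    (fun u => cs.length (u * w)) ⟨1, one_mem _⟩
  refine ⟨u, hu, fun u' hu' => ?_⟩
  rw [← mul_assoc]
  exact (le_total _ _).elim id (hmin (mul_mem hu' hu))

variable {cs}

theorem IsMinCosetRep.not_isLeftInversion (hw : IsMinCosetRep cs J w)
    (hu : u ∈ parabolicSubgroup cs J) : ¬cs.IsLeftInversion w u :=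
  fun h => (hw u hu).not_gt h.2

theorem IsMinCosetRep.exists_word_simple_mul (hw : IsMinCosetRep cs J w) {ω : List B}
    (hω : ∀ j ∈ ω, j ∈ J) (hlen : cs.length (cs.wordProd ω * w) = ω.length + cs.length w)
    {i : B} (hi : i ∈ J) :
    ∃ ω' : List B, (∀ j ∈ ω', j ∈ J) ∧ cs.wordProd ω' = cs.simple i * cs.wordProd ω ∧
      cs.length (cs.wordProd ω' * w) = ω'.length + cs.length w := by
  by_cases hdesc : cs.IsLeftDescent (cs.wordProd ω * w) i
  · obtain ⟨τ, hτ, rfl⟩ := cs.exists_isReduced w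
    have hmem : cs.simple i ∈ cs.leftInvSeq (ω ++ τ) :=
      simple_mem_leftInvSeq_of_isLeftDescent cs (by rwa [cs.wordProd_append])
    rw [leftInvSeq_append, List.mem_append, List.mem_map] at hmem
    rcases hmem with hmem | ⟨t, ht, hconj⟩
    · obtain ⟨k, hk, hget⟩ := List.getElem_of_mem hmem
      have herase := cs.getD_leftInvSeq_mul_wordProd ω k
      rw [List.getD_eq_getElem _ _ hk, hget] at herase
      rw [cs.length_leftInvSeq] at hk
      refine ⟨ω.eraseIdx k, fun j hj => hω j (List.mem_of_mem_eraseIdx hj), herase.symm, ?_⟩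
      rw [← herase, mul_assoc, List.length_eraseIdx_of_lt hk]
      have := cs.isLeftDescent_iff.mp hdesc
      lia
    · have hu := wordProd_mem_parabolicSubgroup cs hω
      have ht_mem : t ∈ parabolicSubgroup cs J := by
        have : t = (cs.wordProd ω)⁻¹ * cs.simple i * cs.wordProd ω := by
          rw [← hconj, MulAut.conj_apply]
          group
        rw [this]
        exact mul_mem (mul_mem (inv_mem hu) (simple_mem_parabolicSubgroup cs hi)) hu
      exact (hw.not_isLeftInversion ht_mem (cs.isLeftInversion_of_mem_leftInvSeq hτ ht)).elim
  · refine ⟨i :: ω, List.forall_mem_cons.mpr ⟨hi, hω⟩, cs.wordProd_cons i ω, ?_⟩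
    rw [cs.wordProd_cons, mul_assoc, cs.not_isLeftDescent_iff.mp hdesc, hlen, List.length_cons]
    lia

theorem IsMinCosetRep.exists_word (hw : IsMinCosetRep cs J w) (hu : u ∈ parabolicSubgroup cs J) :
    ∃ ω : List B, (∀ i ∈ ω, i ∈ J) ∧ cs.wordProd ω = u ∧
      cs.length (u * w) = ω.length + cs.length w := by
  induction hu using Subgroup.closure_induction_left with
  | one => exact ⟨[], by simp⟩
  | mul_left x hx y _ ih =>
    obtain ⟨i, hi, rfl⟩ := hx
    obtain ⟨ω, hω, rfl, hlen⟩ := ih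
    obtain ⟨ω', hω', hprod, hlen'⟩ := hw.exists_word_simple_mul hω hlen hi
    exact ⟨ω', hω', hprod, hprod ▸ hlen'⟩
  | inv_mul_cancel x hx y _ ih =>
    obtain ⟨i, hi, rfl⟩ := hx
    obtain ⟨ω, hω, rfl, hlen⟩ := ih
    obtain ⟨ω', hω', hprod, hlen'⟩ := hw.exists_word_simple_mul hω hlen hi
    rw [cs.inv_simple]
    exact ⟨ω', hω', hprod, hprod ▸ hlen'⟩

theorem IsMinCosetRep.length_mul (hw : IsMinCosetRep cs J w) (hu : u ∈ parabolicSubgroup cs J) :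
    cs.length (u * w) = cs.length u + cs.length w := by
  obtain ⟨ω, -, rfl, hlen⟩ := hw.exists_word hu
  refine (cs.length_mul_le _ _).antisymm ?_
  rw [hlen]
  exact Nat.add_le_add_right (cs.length_wordProd_le ω) _

theorem exists_simple_eq_of_length_eq_one (hu : u ∈ parabolicSubgroup cs J)
    (hlen : cs.length u = 1) : ∃ i ∈ J, u = cs.simple i := by
  obtain ⟨ω, hω, rfl, hlen'⟩ := (isMinCosetRep_one cs J).exists_word hu
  rw [mul_one, hlen, cs.length_one, add_zero] at hlen'
  obtain ⟨i, rfl⟩ := List.length_eq_one_iff.mp hlen'.symm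
  exact ⟨i, hω i List.mem_cons_self, cs.wordProd_singleton i⟩

theorem isMinCosetRep_of_forall_not_isLeftDescent (h : ∀ i ∈ J, ¬cs.IsLeftDescent w i) :
    IsMinCosetRep cs J w := by
  obtain ⟨u, hu, hmin⟩ := exists_isMinCosetRep_mul cs J w
  obtain ⟨ω, hω, hprod, hlen⟩ := hmin.exists_word (inv_mem hu)
  rw [inv_mul_cancel_left] at hlen
  cases ω with
  | nil =>
    rw [cs.wordProd_nil, eq_comm, inv_eq_one] at hprod
    rwa [hprod, one_mul] at hmin
  | cons i ω =>
    refine (h i (hω i List.mem_cons_self) ?_).elim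
    have hiw : cs.simple i * w = cs.wordProd ω * (u * w) :=
      calc cs.simple i * w = cs.simple i * u⁻¹ * (u * w) := by group
        _ = cs.wordProd ω * (u * w) := by
          rw [← hprod, cs.wordProd_cons, cs.simple_mul_simple_cancel_left]
    rw [CoxeterSystem.IsLeftDescent, hiw, hlen, List.length_cons]
    have := cs.length_mul_le (cs.wordProd ω) (u * w)
    have := cs.length_wordProd_le ω
    lia

theorem IsMinCosetRep.exists_conj_simple_eq (hw : IsMinCosetRep cs J w) {r : B}
    (h : w * cs.simple r * w⁻¹ ∈ parabolicSubgroup cs J) :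
    ∃ i ∈ J, w * cs.simple r * w⁻¹ = cs.simple i := by
  refine exists_simple_eq_of_length_eq_one h ?_
  have hlen := hw.length_mul h
  rw [inv_mul_cancel_right] at hlen
  have hle : cs.length (w * cs.simple r) ≤ cs.length w + 1 := by
    simpa using cs.length_mul_le w (cs.simple r)
  have hne : cs.length (w * cs.simple r * w⁻¹) ≠ 0 := by
    rw [Ne, cs.length_eq_zero_iff, conj_eq_one_iff, ← cs.length_eq_zero_iff, cs.length_simple]
    exact one_ne_zero
  lia

/-- Deodhar's lemma. -/
theorem IsMinCosetRep.mul_simple (hw : IsMinCosetRep cs J w) {r : B}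
    (hr : w * cs.simple r * w⁻¹ ∉ parabolicSubgroup cs J) :
    IsMinCosetRep cs J (w * cs.simple r) := by
  refine isMinCosetRep_of_forall_not_isLeftDescent fun i hi hdesc => ?_
  obtain ⟨ω, hω, rfl⟩ := cs.exists_isReduced w
  have hmem : cs.simple i ∈ cs.leftInvSeq (ω ++ [r]) :=
    simple_mem_leftInvSeq_of_isLeftDescent cs (by rwa [cs.wordProd_append, cs.wordProd_singleton])
  have hi' := simple_mem_parabolicSubgroup cs hi
  rw [leftInvSeq_append, cs.leftInvSeq_singleton, List.mem_append, List.map_singleton,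
    List.mem_singleton, MulAut.conj_apply] at hmem
  rcases hmem with hmem | hmem
  · exact hw.not_isLeftInversion hi' (cs.isLeftInversion_of_mem_leftInvSeq hω hmem)
  · exact hr (hmem ▸ hi')

end ParabolicSubgroups

variable {I : Set B}

section SchreierRewriting

/-- The state reached from `w` by Reidemeister–Schreier rewriting of a word with respect to the
minimal representatives of the cosets `W_I w`: a letter `r` moves `w` to `w sᵣ`, unless
`w sᵣ = sₐ w` for some `a ∈ I`, in which case `w sᵣ` lies in the coset of `w`. -/
noncomputable def schreierState (I : Set B) : List B → W → W
  | [], w => w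
  | r :: ω, w =>
    open Classical in
    if ∃ a ∈ I, w * cs.simple r * w⁻¹ = cs.simple a then schreierState I ω w
    else schreierState I ω (w * cs.simple r)

/-- The word in `I` written during the rewriting described in `schreierState`: a letter `r` read in
a state `w` with `w sᵣ = sₐ w`, `a ∈ I`, produces `a`, all other letters produce nothing. -/
noncomputable def schreierOutput (I : Set B) : List B → W → List B
  | [], _ => []
  | r :: ω, w =>
    open Classical in
    if h : ∃ a ∈ I, w * cs.simple r * w⁻¹ = cs.simple a then h.choose :: schreierOutput I ω w
    else schreierOutput I ω (w * cs.simple r)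

section Cons

variable {w : W} {r a : B}

theorem schreierState_cons_of_conj_eq (ha : a ∈ I) (h : w * cs.simple r * w⁻¹ = cs.simple a)
    (ω : List B) : schreierState cs I (r :: ω) w = schreierState cs I ω w :=
  if_pos ⟨a, ha, h⟩

theorem schreierOutput_cons_of_conj_eq (ha : a ∈ I) (h : w * cs.simple r * w⁻¹ = cs.simple a)
    (ω : List B) : schreierOutput cs I (r :: ω) w = a :: schreierOutput cs I ω w := by
  have hex : ∃ a ∈ I, w * cs.simple r * w⁻¹ = cs.simple a := ⟨a, ha, h⟩
  have hchoose : hex.choose = a := simple_injective cs (hex.choose_spec.2.symm.trans h)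
  rw [schreierOutput, dif_pos hex, hchoose]

theorem schreierState_cons_of_conj_ne (h : ¬∃ a ∈ I, w * cs.simple r * w⁻¹ = cs.simple a)
    (ω : List B) : schreierState cs I (r :: ω) w = schreierState cs I ω (w * cs.simple r) :=
  if_neg h

theorem schreierOutput_cons_of_conj_ne (h : ¬∃ a ∈ I, w * cs.simple r * w⁻¹ = cs.simple a)
    (ω : List B) : schreierOutput cs I (r :: ω) w = schreierOutput cs I ω (w * cs.simple r) :=
  dif_neg h

end Cons

theorem schreierState_append (ω ω' : List B) (w : W) : schreierState cs I (ω ++ ω') w =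
    schreierState cs I ω' (schreierState cs I ω w) := by
  induction ω generalizing w with
  | nil => rfl
  | cons r ω ih =>
    rw [List.cons_append]
    by_cases h : ∃ a ∈ I, w * cs.simple r * w⁻¹ = cs.simple a
    · obtain ⟨a, ha, h⟩ := h
      rw [schreierState_cons_of_conj_eq cs ha h, schreierState_cons_of_conj_eq cs ha h, ih]
    · rw [schreierState_cons_of_conj_ne cs h, schreierState_cons_of_conj_ne cs h, ih]

theorem schreierOutput_append (ω ω' : List B) (w : W) : schreierOutput cs I (ω ++ ω') w =
    schreierOutput cs I ω w ++ schreierOutput cs I ω' (schreierState cs I ω w) := by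
  induction ω generalizing w with
  | nil => rfl
  | cons r ω ih =>
    rw [List.cons_append]
    by_cases h : ∃ a ∈ I, w * cs.simple r * w⁻¹ = cs.simple a
    · obtain ⟨a, ha, h⟩ := h
      rw [schreierOutput_cons_of_conj_eq cs ha h, schreierOutput_cons_of_conj_eq cs ha h,
        schreierState_cons_of_conj_eq cs ha h, ih, List.cons_append]
    · rw [schreierOutput_cons_of_conj_ne cs h, schreierOutput_cons_of_conj_ne cs h,
        schreierState_cons_of_conj_ne cs h, ih]

theorem mem_of_mem_schreierOutput {ω : List B} {w : W} {b : B}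
    (hb : b ∈ schreierOutput cs I ω w) : b ∈ I := by
  induction ω generalizing w with
  | nil => simp [schreierOutput] at hb
  | cons r ω ih =>
    by_cases h : ∃ a ∈ I, w * cs.simple r * w⁻¹ = cs.simple a
    · obtain ⟨a, ha, h⟩ := h
      rw [schreierOutput_cons_of_conj_eq cs ha h, List.mem_cons] at hb
      exact hb.elim (fun hba => hba ▸ ha) ih
    · rw [schreierOutput_cons_of_conj_ne cs h] at hb
      exact ih hb

theorem wordProd_schreierOutput_mul_schreierState (ω : List B) (w : W) :
    cs.wordProd (schreierOutput cs I ω w) * schreierState cs I ω w = w * cs.wordProd ω := by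
  induction ω generalizing w with
  | nil => simp [schreierOutput, schreierState]
  | cons r ω ih =>
    by_cases h : ∃ a ∈ I, w * cs.simple r * w⁻¹ = cs.simple a
    · obtain ⟨a, ha, h⟩ := h
      rw [schreierOutput_cons_of_conj_eq cs ha h, schreierState_cons_of_conj_eq cs ha h,
        cs.wordProd_cons, cs.wordProd_cons, mul_assoc, ih, ← h]
      group
    · rw [schreierOutput_cons_of_conj_ne cs h, schreierState_cons_of_conj_ne cs h, ih,
        cs.wordProd_cons, mul_assoc]

theorem isMinCosetRep_schreierState {w : W} (hw : IsMinCosetRep cs I w) (ω : List B) :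
    IsMinCosetRep cs I (schreierState cs I ω w) := by
  induction ω generalizing w with
  | nil => exact hw
  | cons r ω ih =>
    by_cases h : ∃ a ∈ I, w * cs.simple r * w⁻¹ = cs.simple a
    · obtain ⟨a, ha, h⟩ := h
      rw [schreierState_cons_of_conj_eq cs ha h]
      exact ih hw
    · rw [schreierState_cons_of_conj_ne cs h]
      exact ih (hw.mul_simple (mt hw.exists_conj_simple_eq h))

theorem schreierState_one {ω : List B} (hω : ∀ r ∈ ω, r ∈ I) : schreierState cs I ω 1 = 1 := by
  induction ω with
  | nil => rfl
  | cons r ω ih =>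
    obtain ⟨hr, hω⟩ := List.forall_mem_cons.mp hω
    rw [schreierState_cons_of_conj_eq cs hr (by simp), ih hω]

theorem schreierOutput_one {ω : List B} (hω : ∀ r ∈ ω, r ∈ I) : schreierOutput cs I ω 1 = ω := by
  induction ω with
  | nil => rfl
  | cons r ω ih =>
    obtain ⟨hr, hω⟩ := List.forall_mem_cons.mp hω
    rw [schreierOutput_cons_of_conj_eq cs hr (by simp), ih hω]

variable {cs} {w : W}

open Classical in
theorem IsMinCosetRep.length_schreierOutput (hw : IsMinCosetRep cs I w) (ω : List B) :
    (schreierOutput cs I ω w).length =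
      (cs.leftInvSeq ω).countP fun x => w * x * w⁻¹ ∈ parabolicSubgroup cs I := by
  induction ω generalizing w with
  | nil => rfl
  | cons r ω ih =>
    rw [CoxeterSystem.leftInvSeq, List.countP_cons, List.countP_map]
    by_cases h : ∃ a ∈ I, w * cs.simple r * w⁻¹ = cs.simple a
    · obtain ⟨a, ha, h⟩ := h
      have ha' := simple_mem_parabolicSubgroup cs ha
      have hconj (x : W) : w * (cs.simple r * x * (cs.simple r)⁻¹) * w⁻¹ =
          cs.simple a * (w * x * w⁻¹) * (cs.simple a)⁻¹ := by
        rw [← h]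
        group
      rw [schreierOutput_cons_of_conj_eq cs ha h, List.length_cons, ih hw, h]
      simp only [Function.comp_def, MulAut.conj_apply, hconj, Subgroup.mul_mem_cancel_right,
        inv_mem, ha', Subgroup.mul_mem_cancel_left, decide_true, if_true]
    · have hr := mt hw.exists_conj_simple_eq h
      rw [schreierOutput_cons_of_conj_ne cs h, ih (hw.mul_simple hr)]
      simpa [Function.comp_def, mul_assoc] using hr

theorem IsMinCosetRep.length_schreierOutput_altWord_comm (hw : IsMinCosetRep cs I w) (s t : B) :
    (schreierOutput cs I (altWord s t (M s t)) w).length =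
      (schreierOutput cs I (altWord t s (M s t)) w).length := by
  classical
  rw [hw.length_schreierOutput, hw.length_schreierOutput, leftInvSeq_altWord_comm,
    List.countP_reverse]

end SchreierRewriting

section Braid

variable {cs} {w v : W} {s t a b : B}

theorem schreierOutput_altWord_of_conj_eq (ha : a ∈ I) (hb : b ∈ I)
    (hs : w * cs.simple s * w⁻¹ = cs.simple a) (ht : w * cs.simple t * w⁻¹ = cs.simple b) (n : ℕ) :
    schreierOutput cs I (altWord s t n) w = altWord a b n := by
  induction n generalizing s t a b with
  | zero => rfl
  | succ n ih => rw [altWord, schreierOutput_cons_of_conj_eq cs ha hs, ih hb ha ht hs, altWord]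

theorem coxeterMatrix_apply_eq_of_conj_eq (hs : w * cs.simple s * w⁻¹ = cs.simple a)
    (ht : w * cs.simple t * w⁻¹ = cs.simple b) : M a b = M s t := by
  rw [← orderOf_simple_mul_simple cs, ← orderOf_simple_mul_simple cs, ← hs, ← ht, conj_mul]
  exact MulEquiv.orderOf_eq (MulAut.conj w) _

theorem conj_mem_parabolicSubgroup {J : Set B} {d : W} (hd : d ∈ parabolicSubgroup cs J)
    (hv : ∀ q ∈ J, ∃ a ∈ I, v * cs.simple q * v⁻¹ = cs.simple a) :
    v * d * v⁻¹ ∈ parabolicSubgroup cs I := by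
  suffices parabolicSubgroup cs J ≤ (parabolicSubgroup cs I).comap (MulAut.conj v).toMonoidHom from
    this hd
  rw [Subgroup.closure_le]
  rintro _ ⟨q, hq, rfl⟩
  obtain ⟨a, ha, hqa⟩ := hv q hq
  change v * cs.simple q * v⁻¹ ∈ parabolicSubgroup cs I
  rw [hqa]
  exact simple_mem_parabolicSubgroup cs ha

theorem IsMinCosetRep.eq_one_of_forall_conj_eq {J : Set B} {d : W}
    (hvd : IsMinCosetRep cs I (v * d)) (hv : IsMinCosetRep cs J v⁻¹)
    (hd : d ∈ parabolicSubgroup cs J)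
    (hconj : ∀ q ∈ J, ∃ a ∈ I, v * cs.simple q * v⁻¹ = cs.simple a) : d = 1 := by
  have hle := hvd _ (inv_mem (conj_mem_parabolicSubgroup hd hconj))
  have hlen := hv.length_mul (inv_mem hd)
  rw [← mul_inv_rev, cs.length_inv, cs.length_inv, cs.length_inv] at hlen
  rw [show (v * d * v⁻¹)⁻¹ * (v * d) = v by group] at hle
  exact cs.length_eq_zero_iff.mp (by lia)

theorem exists_conj_eq_of_mem_schreierOutput {J : Set B} (hv : IsMinCosetRep cs J v⁻¹)
    {ω : List B} (hω : ∀ q ∈ ω, q ∈ J) {d : W} (hd : d ∈ parabolicSubgroup cs J)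
    (hb : b ∈ schreierOutput cs I ω (v * d)) :
    ∃ q ∈ J, v * cs.simple q * v⁻¹ = cs.simple b := by
  induction ω generalizing d with
  | nil => simp [schreierOutput] at hb
  | cons r ω ih =>
    obtain ⟨hr, hω⟩ := List.forall_mem_cons.mp hω
    have hr' := simple_mem_parabolicSubgroup cs hr
    by_cases h : ∃ a ∈ I, v * d * cs.simple r * (v * d)⁻¹ = cs.simple a
    · obtain ⟨a, ha, h⟩ := h
      rw [schreierOutput_cons_of_conj_eq cs ha h, List.mem_cons] at hb
      rcases hb with rfl | hb
      · have hmem : v⁻¹ * cs.simple b * v⁻¹⁻¹ ∈ parabolicSubgroup cs J := by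
          rw [show v⁻¹ * cs.simple b * v⁻¹⁻¹ = d * cs.simple r * d⁻¹ by rw [← h]; group]
          exact mul_mem (mul_mem hd hr') (inv_mem hd)
        obtain ⟨q, hq, hbq⟩ := hv.exists_conj_simple_eq hmem
        exact ⟨q, hq, by rw [← hbq]; group⟩
      · exact ih hω hd hb
    · rw [schreierOutput_cons_of_conj_ne cs h, mul_assoc] at hb
      exact ih hω (mul_mem hd hr') hb

theorem eq_of_mem_schreierOutput (hv : IsMinCosetRep cs {s, t} v⁻¹) {ω ω' : List B}
    (hω : ∀ q ∈ ω, q ∈ ({s, t} : Set B)) (hω' : ∀ q ∈ ω', q ∈ ({s, t} : Set B)) {d : W}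
    (hd : d ∈ parabolicSubgroup cs {s, t})
    (hconj : ¬∀ q ∈ ({s, t} : Set B), ∃ a ∈ I, v * cs.simple q * v⁻¹ = cs.simple a)
    (ha : a ∈ schreierOutput cs I ω (v * d)) (hb : b ∈ schreierOutput cs I ω' (v * d)) :
    a = b := by
  obtain ⟨p, hp, hpa⟩ := exists_conj_eq_of_mem_schreierOutput hv hω hd ha
  obtain ⟨q, hq, hqb⟩ := exists_conj_eq_of_mem_schreierOutput hv hω' hd hb
  rcases eq_or_ne p q with rfl | hpq
  · exact simple_injective cs (hpa.symm.trans hqb)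
  · refine (hconj fun r hr => ?_).elim
    have hrpq : r = p ∨ r = q := by grind
    rcases hrpq with rfl | rfl
    exacts [⟨a, mem_of_mem_schreierOutput cs ha, hpa⟩, ⟨b, mem_of_mem_schreierOutput cs hb, hqb⟩]

/-- Write `w = v d` with `d ∈ W_{s,t}` and `v` minimal in its coset `v W_{s,t}`. Each letter written
while reading either word is the conjugate of `s` or of `t` by `v`. If both conjugates are simple
reflections in `W_I`, then `d = 1` and the words are translated letter by letter. Otherwise a single
letter is repeated, and the inversion sequences determine how often. -/
theorem IsMinCosetRep.schreierOutput_altWord_comm (hw : IsMinCosetRep cs I w) (hst : s ≠ t) :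
    schreierOutput cs I (altWord s t (M s t)) w = schreierOutput cs I (altWord t s (M s t)) w ∨
    ∃ a b, a ≠ b ∧ M a b = M s t ∧
      schreierOutput cs I (altWord s t (M s t)) w = altWord a b (M s t) ∧
      schreierOutput cs I (altWord t s (M s t)) w = altWord b a (M s t) := by
  obtain ⟨d, hd, hv⟩ := exists_isMinCosetRep_mul cs {s, t} w⁻¹
  obtain ⟨v, rfl⟩ : ∃ v, w = v * d := ⟨w * d⁻¹, by group⟩
  rw [mul_inv_rev, mul_inv_cancel_left] at hv
  by_cases hconj : ∀ q ∈ ({s, t} : Set B), ∃ a ∈ I, v * cs.simple q * v⁻¹ = cs.simple a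
  · obtain rfl := hw.eq_one_of_forall_conj_eq hv hd hconj
    rw [mul_one]
    obtain ⟨a, ha, hsa⟩ := hconj s (by simp)
    obtain ⟨b, hb, htb⟩ := hconj t (by simp)
    refine .inr ⟨a, b, ?_, coxeterMatrix_apply_eq_of_conj_eq hsa htb,
      schreierOutput_altWord_of_conj_eq ha hb hsa htb _,
      schreierOutput_altWord_of_conj_eq hb ha htb hsa _⟩
    rintro rfl
    exact hst (simple_injective cs (conj_injective (hsa.trans htb.symm)))
  · refine .inl (List.ext_getElem (hw.length_schreierOutput_altWord_comm s t) fun k _ _ => ?_)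
    exact eq_of_mem_schreierOutput hv (fun q hq => eq_or_eq_of_mem_altWord hq)
      (fun q hq => (eq_or_eq_of_mem_altWord hq).symm) hd hconj (List.getElem_mem _)
      (List.getElem_mem _)

theorem IsMinCosetRep.schreierState_altWord_comm (hw : IsMinCosetRep cs I w) (hst : s ≠ t) :
    schreierState cs I (altWord s t (M s t)) w = schreierState cs I (altWord t s (M s t)) w := by
  have hout : cs.wordProd (schreierOutput cs I (altWord s t (M s t)) w) =
      cs.wordProd (schreierOutput cs I (altWord t s (M s t)) w) := by
    rcases hw.schreierOutput_altWord_comm hst with h | ⟨a, b, -, hab, hs, ht⟩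
    · rw [h]
    · rw [hs, ht, ← hab, wordProd_altWord_comm]
  refine mul_left_cancel (a := cs.wordProd (schreierOutput cs I (altWord s t (M s t)) w)) ?_
  rw [wordProd_schreierOutput_mul_schreierState, hout, wordProd_schreierOutput_mul_schreierState,
    wordProd_altWord_comm]

end Braid

end Coxeter

namespace ArtinTitsMonoid

variable {B : Type*} {M : CoxeterMatrix B} {I : Set B}

section Words

/-- The standard parabolic submonoid `B_I⁺`. -/
abbrev parabolicSubmonoid (M : CoxeterMatrix B) (I : Set B) : Submonoid (ArtinTitsMonoid M) :=
  Submonoid.closure (of M '' I)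

/-- The element of the Artin–Tits monoid represented by a word. -/
def ofWord (M : CoxeterMatrix B) (ω : List B) : ArtinTitsMonoid M :=
  (braidCon M).mk' (FreeMonoid.ofList ω)

theorem ofWord_append (ω ω' : List B) : ofWord M (ω ++ ω') = ofWord M ω * ofWord M ω' :=
  map_mul (braidCon M).mk' (FreeMonoid.ofList ω) (FreeMonoid.ofList ω')

theorem ofWord_surjective : Function.Surjective (ofWord M) := fun x =>
  ((braidCon M).mk'_surjective x).imp' FreeMonoid.toList fun _ h => h

theorem ofWord_eq_ofWord_iff {ω ω' : List B} :
    ofWord M ω = ofWord M ω' ↔ braidCon M (FreeMonoid.ofList ω) (FreeMonoid.ofList ω') :=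
  (braidCon M).eq

theorem mem_parabolicSubmonoid_iff {x : ArtinTitsMonoid M} :
    x ∈ parabolicSubmonoid M I ↔ ∃ ω : List B, (∀ i ∈ ω, i ∈ I) ∧ ofWord M ω = x := by
  constructor
  · intro hx
    induction hx using Submonoid.closure_induction with
    | mem _ hx =>
      obtain ⟨i, hi, rfl⟩ := hx
      exact ⟨[i], by simpa using hi, rfl⟩
    | one => exact ⟨[], by simp, rfl⟩
    | mul _ _ _ _ hx hy =>
      obtain ⟨ω, hω, rfl⟩ := hx
      obtain ⟨ω', hω', rfl⟩ := hy
      exact ⟨ω ++ ω', List.forall_mem_append.mpr ⟨hω, hω'⟩, ofWord_append ω ω'⟩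
  · rintro ⟨ω, hω, rfl⟩
    induction ω with
    | nil => exact one_mem _
    | cons i ω ih =>
      obtain ⟨hi, hω⟩ := List.forall_mem_cons.mp hω
      rw [← List.singleton_append, ofWord_append]
      exact mul_mem (Submonoid.subset_closure ⟨i, hi, rfl⟩) (ih hω)

end Words

section Letters

/-- The congruence relating words in which the same letters occur. -/
def letterCon (B : Type*) : Con (FreeMonoid B) where
  r x y := ∀ i, i ∈ x.toList ↔ i ∈ y.toList
  iseqv := ⟨fun _ _ => .rfl, fun h i => (h i).symm, fun h h' i => (h i).trans (h' i)⟩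
  mul' h h' i := by simp only [FreeMonoid.toList_mul, List.mem_append, h i, h' i]

theorem braidCon_le_letterCon (M : CoxeterMatrix B) : braidCon M ≤ letterCon B := by
  refine Con.conGen_le.mpr ?_
  rintro _ _ ⟨s, t, hst, hm, rfl, rfl⟩ i
  have hm2 : 2 ≤ M s t := (Nat.two_le_iff _).mpr ⟨hm, M.off_diagonal s t hst⟩
  rw [FreeMonoid.toList_ofList, FreeMonoid.toList_ofList, Coxeter.mem_altWord_iff hm2,
    Coxeter.mem_altWord_iff hm2, or_comm]

theorem mem_parabolicSubmonoid_of_mul_mem {x y : ArtinTitsMonoid M}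
    (h : x * y ∈ parabolicSubmonoid M I) : x ∈ parabolicSubmonoid M I := by
  obtain ⟨ω, hω, hprod⟩ := mem_parabolicSubmonoid_iff.mp h
  obtain ⟨ξ, rfl⟩ := ofWord_surjective x
  obtain ⟨η, rfl⟩ := ofWord_surjective y
  rw [← ofWord_append, ofWord_eq_ofWord_iff] at hprod
  have hletters := braidCon_le_letterCon M hprod
  exact mem_parabolicSubmonoid_iff.mpr
    ⟨ξ, fun i hi => hω i ((hletters i).mpr (List.mem_append_left η hi)), rfl⟩

end Letters

section Retraction

open Coxeter

variable {W : Type*} [Group W] (cs : CoxeterSystem M W)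

/-- The congruence relating words which, from every minimal coset representative, are rewritten to
words representing the same element of the Artin–Tits monoid and lead to the same state. -/
def schreierCon (I : Set B) : Con (FreeMonoid B) where
  r x y := ∀ w, IsMinCosetRep cs I w →
    schreierState cs I x.toList w = schreierState cs I y.toList w ∧
      ofWord M (schreierOutput cs I x.toList w) = ofWord M (schreierOutput cs I y.toList w)
  iseqv := ⟨fun _ _ _ => ⟨rfl, rfl⟩, fun h w hw => ⟨(h w hw).1.symm, (h w hw).2.symm⟩,
    fun h h' w hw => ⟨(h w hw).1.trans (h' w hw).1, (h w hw).2.trans (h' w hw).2⟩⟩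
  mul' {_ _ _ _} h h' w hw := by
    obtain ⟨hstate, hout⟩ := h w hw
    obtain ⟨hstate', hout'⟩ := h' _ (isMinCosetRep_schreierState cs hw _)
    simp only [FreeMonoid.toList_mul, schreierState_append, schreierOutput_append, ofWord_append]
    rw [← hstate, hout, hstate', hout']
    exact ⟨rfl, rfl⟩

theorem ofWord_altWord_comm {s t : B} (hst : s ≠ t) (hm : M s t ≠ 0) :
    ofWord M (altWord s t (M s t)) = ofWord M (altWord t s (M s t)) :=
  ofWord_eq_ofWord_iff.mpr (.of _ _ ⟨s, t, hst, hm, rfl, rfl⟩)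

theorem braidCon_le_schreierCon (I : Set B) : braidCon M ≤ schreierCon cs I := by
  refine Con.conGen_le.mpr ?_
  rintro _ _ ⟨s, t, hst, hm, rfl, rfl⟩ w hw
  refine ⟨hw.schreierState_altWord_comm hst, ?_⟩
  rw [FreeMonoid.toList_ofList, FreeMonoid.toList_ofList]
  rcases hw.schreierOutput_altWord_comm hst with h | ⟨a, b, hab, hM, hs, ht⟩
  · rw [h]
  · rw [hs, ht, ← hM]
    exact ofWord_altWord_comm hab (hM ▸ hm)

/-- The retraction of the Artin–Tits monoid onto `B_I⁺`, which rewrites a word starting from the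
trivial coset. It is not a homomorphism, but it commutes with left multiplication by `B_I⁺`. -/
noncomputable def parabolicRetraction (I : Set B) (x : ArtinTitsMonoid M) : ArtinTitsMonoid M :=
  Con.liftOn x (fun ω => ofWord M (schreierOutput cs I ω.toList 1)) fun _ _ h =>
    (braidCon_le_schreierCon cs I h 1 (isMinCosetRep_one cs I)).2

theorem parabolicRetraction_ofWord (ω : List B) :
    parabolicRetraction cs I (ofWord M ω) = ofWord M (schreierOutput cs I ω 1) :=
  rfl

theorem parabolicRetraction_mem (x : ArtinTitsMonoid M) :
    parabolicRetraction cs I x ∈ parabolicSubmonoid M I := by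
  obtain ⟨ω, rfl⟩ := ofWord_surjective x
  exact mem_parabolicSubmonoid_iff.mpr
    ⟨_, fun _ => mem_of_mem_schreierOutput cs, (parabolicRetraction_ofWord cs ω).symm⟩

theorem parabolicRetraction_mul {x : ArtinTitsMonoid M} (hx : x ∈ parabolicSubmonoid M I)
    (y : ArtinTitsMonoid M) :
    parabolicRetraction cs I (x * y) = x * parabolicRetraction cs I y := by
  obtain ⟨ξ, hξ, rfl⟩ := mem_parabolicSubmonoid_iff.mp hx
  obtain ⟨η, rfl⟩ := ofWord_surjective y
  rw [← ofWord_append, parabolicRetraction_ofWord, parabolicRetraction_ofWord,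
    schreierOutput_append, schreierOutput_one cs hξ, schreierState_one cs hξ, ofWord_append]

end Retraction

end ArtinTitsMonoid

/-- In the Artin–Tits monoid of a Coxeter system `(W, S)`, if two elements of the parabolic
submonoid `B_I⁺` have a common right multiple, then they have a common right multiple in
`B_I⁺`; moreover every right lcm of them lies in `B_I⁺`. -/
theorem artin_parabolic_submonoid_closed_under_right_lcm
    {B : Type*} (M : CoxeterMatrix B) {W : Type*} [Group W] (cs : CoxeterSystem M W)
    (I : Set B) (x y : ArtinTitsMonoid M)
    (hx : x ∈ Submonoid.closure (ArtinTitsMonoid.of M '' I))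
    (hy : y ∈ Submonoid.closure (ArtinTitsMonoid.of M '' I))
    (hcm : ∃ m : ArtinTitsMonoid M, (∃ u, m = x * u) ∧ (∃ v, m = y * v)) :
    (∃ m ∈ Submonoid.closure (ArtinTitsMonoid.of M '' I),
      (∃ u, m = x * u) ∧ (∃ v, m = y * v)) ∧
    (∀ l : ArtinTitsMonoid M,
      ((∃ u, l = x * u) ∧ (∃ v, l = y * v) ∧
        ∀ m : ArtinTitsMonoid M, (∃ u, m = x * u) → (∃ v, m = y * v) → ∃ w, m = l * w) →
      l ∈ Submonoid.closure (ArtinTitsMonoid.of M '' I)) := by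
  obtain ⟨m, ⟨u, hu⟩, ⟨v, hv⟩⟩ := hcm
  let ρ := ArtinTitsMonoid.parabolicRetraction cs I
  have hρm : ρ m ∈ Submonoid.closure (ArtinTitsMonoid.of M '' I) :=
    ArtinTitsMonoid.parabolicRetraction_mem cs m
  have hxm : ∃ u', ρ m = x * u' :=
    ⟨ρ u, hu ▸ ArtinTitsMonoid.parabolicRetraction_mul cs hx u⟩
  have hym : ∃ v', ρ m = y * v' :=
    ⟨ρ v, hv ▸ ArtinTitsMonoid.parabolicRetraction_mul cs hy v⟩
  refine ⟨⟨ρ m, hρm, hxm, hym⟩, ?_⟩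
  rintro l ⟨-, -, hl⟩
  obtain ⟨k, hk⟩ := hl (ρ m) hxm hym
  exact ArtinTitsMonoid.mem_parabolicSubmonoid_of_mul_mem (hk ▸ hρm)
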